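/- Let G be a finite simple graph that has at least one edge and in which every edge belongs to at least 4 triangles (i.e., the two endpoints of every edge have at least 4 common neighbors). Then either G has a K_6 minor, or G is a clique sum over K_l for some l ≤ 4. -/

import Mathlib

open scoped Classical

/-- `H` is a minor of `G`: there is a family of pairwise disjoint nonempty connected
"branch sets" in `G`, one for each vertex of `H`, such that every edge of `H` is
realized by an edge of `G` between the corresponding branch sets. -/
def HasMinor {V W : Type*} (G : SimpleGraph V) (H : SimpleGraph W) : Prop :=
  ∃ B : W → Set V,
    (∀ i, (B i).Nonempty) ∧
    (∀ i j, i ≠ j → Disjoint (B i) (B j)) ∧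
    (∀ i, (G.induce (B i)).Connected) ∧
    (∀ i j, H.Adj i j → ∃ x ∈ B i, ∃ y ∈ B j, G.Adj x y)

/-!
By Mader's bound, `4n - 9` edges on `n ≥ 4` vertices force a `K₆` minor, so we may assume that some
vertex `u` has degree at most `7`. If all such vertices are adjacent to all others, then `G` is
complete on at least `6` vertices; so let `u` have a non-neighbor. Its neighborhood induces a graph
of minimum degree at least `4` on at most `7` vertices, hence each of its vertices has at most two
non-neighbors there. Let `C` be a component of what remains after deleting `u` and its neighbors. If
the neighbors of `C` form a clique, then `C` is cut off by a clique, which together with `u` gives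
`K₆` unless it has at most four vertices. Otherwise `C` is attached to two nonadjacent neighbors
`a`, `b` of `u`. The non-neighbor condition yields a triangle model `B₁`, `B₂`, `B₃` in the rest of
the neighborhood, with each `Bᵢ` adjacent to both `a` and `b`. Then `{u}`, `C ∪ {a}`, `{b}`, `B₁`,
`B₂`, `B₃` is a model of `K₆`.

The same dichotomy proves Mader's bound. In a minimal counterexample with exactly `4n - 9` edges,
deleting a vertex shows that all degrees are at least `5`, and contracting an edge shows that every
edge lies in at least four triangles. Hence the graph is a clique sum over at most four vertices,
and counting edges shows that one of its two sides is a smaller counterexample.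
-/

section Minors

variable {V W X : Type*} {G : SimpleGraph V} {H : SimpleGraph W} {K : SimpleGraph X}

theorem induce_singleton_connected (x : V) : (G.induce {x}).Connected := by
  rw [SimpleGraph.induce_singleton_eq_top]
  exact SimpleGraph.connected_top

theorem induce_insert_connected {C : Set V} (hC : (G.induce C).Connected) {x c : V}
    (hc : c ∈ C) (hxc : G.Adj x c) : (G.induce (insert x C)).Connected :=
  SimpleGraph.connected_induce_union (induce_singleton_connected x).preconnected
    hC.preconnected rfl hc hxc

theorem induce_iUnion_connected {B : W → Set V} (hH : H.Connected)
    (hB : ∀ i, (G.induce (B i)).Connected)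
    (hadj : ∀ i j, H.Adj i j → ∃ x ∈ B i, ∃ y ∈ B j, G.Adj x y) :
    (G.induce (⋃ i, B i)).Connected := by
  have reachable_of_mem : ∀ i (x y : B i), (G.induce (⋃ i, B i)).Reachable
      ⟨x, Set.mem_iUnion_of_mem i x.2⟩ ⟨y, Set.mem_iUnion_of_mem i y.2⟩ := fun i x y =>
    ((hB i).preconnected x y).map
      (SimpleGraph.induceHomOfLE G (Set.subset_iUnion B i)).toHom
  have reachable_of_walk : ∀ {i j} (_ : H.Walk i j) (x : B i) (y : B j),
      (G.induce (⋃ i, B i)).Reachable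
        ⟨x, Set.mem_iUnion_of_mem i x.2⟩ ⟨y, Set.mem_iUnion_of_mem j y.2⟩ := by
    intro i j p
    induction p with
    | nil => exact reachable_of_mem _
    | @cons i k j hik _ ih =>
      intro x y
      obtain ⟨a, ha, b, hb, hab⟩ := hadj i k hik
      have hstep : (G.induce (⋃ i, B i)).Adj ⟨a, Set.mem_iUnion_of_mem i ha⟩
        ⟨b, Set.mem_iUnion_of_mem k hb⟩ := hab
      exact (reachable_of_mem i x ⟨a, ha⟩).trans (hstep.reachable.trans (ih ⟨b, hb⟩ y))
  obtain ⟨i⟩ := hH.nonempty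
  obtain ⟨x⟩ := (hB i).nonempty
  refine SimpleGraph.connected_iff_exists_forall_reachable _ |>.2
    ⟨⟨x, Set.mem_iUnion_of_mem i x.2⟩, fun ⟨y, hy⟩ => ?_⟩
  obtain ⟨j, hj⟩ := Set.mem_iUnion.1 hy
  obtain ⟨p⟩ := hH.preconnected i j
  exact reachable_of_walk p x ⟨y, hj⟩

theorem HasMinor.trans (hGH : HasMinor G H) (hHK : HasMinor H K) : HasMinor G K := by
  obtain ⟨B, -, hdisj, hconn, hadj⟩ := hGH
  obtain ⟨C, -, hdisj', hconn', hadj'⟩ := hHK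
  have hunion : ∀ i, (G.induce (⋃ j : C i, B j)).Connected := fun i =>
    induce_iUnion_connected (hconn' i) (fun j => hconn j) fun j k hjk => hadj j k hjk
  refine ⟨fun i => ⋃ j : C i, B j, fun i => Set.nonempty_coe_sort.1 (hunion i).nonempty, ?_,
    hunion, ?_⟩
  · intro i i' hii'
    simp only [Set.disjoint_iUnion_left, Set.disjoint_iUnion_right]
    exact fun j j' => hdisj _ _ fun h => Set.disjoint_left.1 (hdisj' i i' hii') j'.2 (h ▸ j.2)
  · intro i i' hii'
    obtain ⟨j, hj, j', hj', hjj'⟩ := hadj' i i' hii'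
    obtain ⟨x, hx, y, hy, hxy⟩ := hadj j j' hjj'
    exact ⟨x, Set.mem_iUnion_of_mem ⟨j, hj⟩ hx, y, Set.mem_iUnion_of_mem ⟨j', hj'⟩ hy, hxy⟩

theorem HasMinor.of_isContained (h : H.IsContained G) : HasMinor G H := by
  obtain ⟨f⟩ := h
  refine ⟨fun i => {f i}, fun i => Set.singleton_nonempty _, fun i j hij => ?_,
    fun i => induce_singleton_connected _, fun i j hij => ⟨f i, rfl, f j, rfl, f.toHom.map_adj hij⟩⟩
  exact Set.disjoint_singleton.2 (f.injective.ne hij)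

theorem HasMinor.of_isClique {n : ℕ} {s : Set V} (hs : G.IsClique s) (hfin : s.Finite)
    (hn : n ≤ s.ncard) : HasMinor G (⊤ : SimpleGraph (Fin n)) := by
  lift s to Finset V using hfin
  rw [Set.ncard_coe_finset] at hn
  exact .of_isContained ((SimpleGraph.not_cliqueFree_iff_top_isContained n).1 fun h =>
    SimpleGraph.IsNClique.not_cliqueFree ⟨hs, rfl⟩ (h.mono hn))

/-- The contraction of the edge `uv` of `G`. The merged vertex keeps the name `u`, so this is a
graph on the complement of `v`. -/
noncomputable def contractEdge (G : SimpleGraph V) (u v : V) : SimpleGraph ({v}ᶜ : Set V) :=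
  (G.map (Function.update id v u)).induce {v}ᶜ

theorem hasMinor_contractEdge {u v : V} (huv : G.Adj u v) : HasMinor G (contractEdge G u v) := by
  let f : V → V := Function.update id v u
  have hfv : f v = u := Function.update_self ..
  have hf : ∀ x, x ≠ v → f x = x := fun x hx => Function.update_of_ne hx ..
  have hconn : ∀ i : ({v}ᶜ : Set V), (G.induce (f ⁻¹' {i.1})).Connected := by
    rintro ⟨i, hi : i ≠ v⟩
    by_cases hiu : i = u
    · have hfiber : f ⁻¹' {i} = {u, v} := by
        ext x
        by_cases hx : x = v <;> simp_all
      rw [hfiber]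
      exact SimpleGraph.induce_pair_connected_of_adj huv
    · have hfiber : f ⁻¹' {i} = {i} := by
        ext x
        by_cases hx : x = v
        · simp [hx, hfv, hi.symm, Ne.symm hiu]
        · simp [hf x hx]
      rw [hfiber]
      exact induce_singleton_connected i
  refine ⟨fun i => f ⁻¹' {i.1}, fun i => Set.nonempty_coe_sort.1 (hconn i).nonempty,
    fun i j hij => ?_, hconn, ?_⟩
  · exact (Set.disjoint_singleton.2 (Subtype.val_injective.ne hij)).preimage f
  · rintro i j ⟨-, x, y, hxy, hx, hy⟩
    exact ⟨x, hx, y, hy, hxy⟩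

end Minors

section CliqueModels

variable {V W : Type*} {G : SimpleGraph V} {H : SimpleGraph W} {n : ℕ}

/-- The sets `B i` are the branch sets of a model of the complete graph on `Fin n` in `G`:
connected, pairwise disjoint and pairwise adjacent. -/
def IsCliqueModel (G : SimpleGraph V) (B : Fin n → Set V) : Prop :=
  (∀ i, (G.induce (B i)).Connected) ∧
    Pairwise fun i j => Disjoint (B i) (B j) ∧ ∃ x ∈ B i, ∃ y ∈ B j, G.Adj x y

namespace IsCliqueModel

theorem hasMinor {B : Fin n → Set V} (hB : IsCliqueModel G B) :
    HasMinor G (⊤ : SimpleGraph (Fin n)) :=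
  ⟨B, fun i => Set.nonempty_coe_sort.1 (hB.1 i).nonempty, fun _ _ hij => (hB.2 hij).1, hB.1,
    fun _ _ hij => (hB.2 hij.ne).2⟩

theorem cons {B : Fin n → Set V} (hB : IsCliqueModel G B) {C : Set V}
    (hC : (G.induce C).Connected)
    (hCB : ∀ i, Disjoint C (B i) ∧ ∃ x ∈ C, ∃ y ∈ B i, G.Adj x y) :
    IsCliqueModel G (Fin.cons C B : Fin (n + 1) → Set V) := by
  refine ⟨Fin.cases hC hB.1, pairwise_fin_succ_iff.2 ⟨fun i => ?_, hCB, fun i j hij => ?_⟩⟩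
  · obtain ⟨hdisj, x, hx, y, hy, hxy⟩ := hCB i
    exact ⟨hdisj.symm, y, hy, x, hx, hxy.symm⟩
  · exact hB.2 hij

theorem image {B : Fin n → Set W} (hB : IsCliqueModel H B) (f : H.Copy G) :
    IsCliqueModel G fun i => f '' B i := by
  refine ⟨fun i => ?_, fun i j hij => ?_⟩
  · exact (hB.1 i).map (SimpleGraph.induceHom f.toHom (Set.mapsTo_image f (B i)))
      Set.imageFactorization_surjective
  · obtain ⟨hdisj, x, hx, y, hy, hxy⟩ := hB.2 hij
    exact ⟨(Set.disjoint_image_iff f.injective).2 hdisj, f x, Set.mem_image_of_mem f hx,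
      f y, Set.mem_image_of_mem f hy, f.toHom.map_adj hxy⟩

end IsCliqueModel

theorem isCliqueModel_three {X Y Z : Set V} (hX : (G.induce X).Connected)
    (hY : (G.induce Y).Connected) (hZ : (G.induce Z).Connected)
    (hXY : Disjoint X Y ∧ ∃ x ∈ X, ∃ y ∈ Y, G.Adj x y)
    (hXZ : Disjoint X Z ∧ ∃ x ∈ X, ∃ z ∈ Z, G.Adj x z)
    (hYZ : Disjoint Y Z ∧ ∃ y ∈ Y, ∃ z ∈ Z, G.Adj y z) :
    IsCliqueModel G ![X, Y, Z] := by
  have hmodel : IsCliqueModel G ![Z] := ⟨by simpa [Unique.forall_iff], Subsingleton.pairwise⟩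
  exact (hmodel.cons hY fun _ => by simpa).cons hX (Fin.forall_fin_two.2 ⟨hXY, hXZ⟩)

theorem exists_isCliqueModel_three_of_not_isAcyclic (h : ¬ G.IsAcyclic) :
    ∃ B : Fin 3 → Set V, IsCliqueModel G B := by
  simp only [SimpleGraph.IsAcyclic, not_forall, not_not] at h
  obtain ⟨v, c, hc⟩ := h
  match c, hc with
  | .cons hvv .nil, _ => exact absurd hvv G.irrefl
  | .cons hvw (.cons hwx .nil), hc => simp [SimpleGraph.Walk.cons_isCycle_iff] at hc
  | .cons (v := w) hvw (.cons (v := x) hwx (.cons (v := y) hxy p)), hc =>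
    obtain ⟨hpath, -⟩ := (SimpleGraph.Walk.cons_isCycle_iff _ _).1 hc
    simp only [SimpleGraph.Walk.cons_isPath_iff, SimpleGraph.Walk.support_cons,
      List.mem_cons, not_or] at hpath
    obtain ⟨⟨-, hx⟩, hwx', hw⟩ := hpath
    exact ⟨_, isCliqueModel_three (induce_singleton_connected w) (induce_singleton_connected x)
      p.connected_induce_support
      ⟨Set.disjoint_singleton.2 hwx', w, rfl, x, rfl, hwx⟩
      ⟨Set.disjoint_singleton_left.2 hw, w, rfl, v, p.end_mem_support, hvw.symm⟩
      ⟨Set.disjoint_singleton_left.2 hx, x, rfl, y, p.start_mem_support, hxy⟩⟩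

theorem not_isAcyclic_of_two_le_ncard_neighborSet [Finite V] [Nonempty V]
    (h : ∀ v, 2 ≤ (G.neighborSet v).ncard) : ¬ G.IsAcyclic := by
  intro hG
  obtain ⟨u, v, p, hp, hlongest⟩ :=
    SimpleGraph.Walk.exists_isPath_forall_isPath_length_le_length G
  have hsub : G.neighborSet u ⊆ {p.snd} := by
    intro w hw
    refine hG.eq_snd_of_adj_start hp hw (by_contra fun hwp => ?_)
    have := hlongest _ _ _ (hp.cons (h := hw.symm) hwp)
    simp at this
  have := (h u).trans (Set.ncard_le_ncard hsub)
  simp at this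

end CliqueModels

section Links

variable {V : Type*} {G : SimpleGraph V} {N S : Set V} {a b : V}

/-- `S` contains the branch sets of a model of a triangle each of which has a neighbor of `a` and
a neighbor of `b`. -/
def HasJoinedTriangle (G : SimpleGraph V) (S : Set V) (a b : V) : Prop :=
  ∃ B : Fin 3 → Set V, IsCliqueModel G B ∧
    ∀ i, B i ⊆ S ∧ (∃ x ∈ B i, G.Adj a x) ∧ ∃ x ∈ B i, G.Adj b x

theorem HasJoinedTriangle.symm (h : HasJoinedTriangle G S a b) : HasJoinedTriangle G S b a := by
  obtain ⟨B, hB, hS⟩ := h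
  exact ⟨B, hB, fun i => ⟨(hS i).1, (hS i).2.2, (hS i).2.1⟩⟩

theorem HasJoinedTriangle.of_pairs {x y z w v : V} (hS : {x, y, z, w, v} ⊆ S)
    (hx : x ∉ ({y, z, w, v} : Set V)) (hdisj : Disjoint {y, z} ({w, v} : Set V))
    (hyz : y = z ∨ G.Adj y z) (hwv : G.Adj w v)
    (h₁₂ : G.Adj x y ∨ G.Adj x z) (h₁₃ : G.Adj x w ∨ G.Adj x v)
    (h₂₃ : G.Adj y w ∨ G.Adj y v ∨ G.Adj z w ∨ G.Adj z v)
    (ha : G.Adj a x ∧ (G.Adj a y ∨ G.Adj a z) ∧ (G.Adj a w ∨ G.Adj a v))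
    (hb : G.Adj b x ∧ (G.Adj b y ∨ G.Adj b z) ∧ (G.Adj b w ∨ G.Adj b v)) :
    HasJoinedTriangle G S a b := by
  have hconn : (G.induce {y, z}).Connected := by
    obtain rfl | hyz := hyz
    · rw [Set.pair_eq_singleton]
      exact induce_singleton_connected y
    · exact SimpleGraph.induce_pair_connected_of_adj hyz
  simp only [Set.insert_subset_iff, Set.singleton_subset_iff] at hS
  simp only [Set.mem_insert_iff, Set.mem_singleton_iff, not_or] at hx
  refine ⟨_, isCliqueModel_three (induce_singleton_connected x) hconn
    (SimpleGraph.induce_pair_connected_of_adj hwv) ⟨?_, ?_⟩ ⟨?_, ?_⟩ ⟨hdisj, ?_⟩, ?_⟩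
  all_goals simp only [Fin.forall_fin_succ, Set.insert_subset_iff, Set.singleton_subset_iff,
    Set.disjoint_singleton_left, Set.mem_insert_iff, Set.mem_singleton_iff, exists_eq_or_imp,
    exists_eq_left, Matrix.cons_val_zero, Matrix.cons_val_succ, Fin.forall_fin_zero]
  all_goals grind

/-- Every vertex of `N` has at most two non-neighbors in `N` besides itself, that is, it is adjacent
to one of any three other vertices of `N`. -/
def CodegreeLETwo (G : SimpleGraph V) (N : Set V) : Prop :=
  ∀ ⦃x y z w : V⦄, {x, y, z, w} ⊆ N → [x, y, z, w].Nodup → G.Adj x y ∨ G.Adj x z ∨ G.Adj x w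

theorem hasJoinedTriangle_of_two_le_ncard (hS : S.Finite) (hne : S.Nonempty)
    (hdeg : ∀ x ∈ S, 2 ≤ (S ∩ G.neighborSet x).ncard)
    (ha : ∀ x ∈ S, G.Adj a x) (hb : ∀ x ∈ S, G.Adj b x) : HasJoinedTriangle G S a b := by
  have := hS.to_subtype
  have := hne.to_subtype
  have hdeg' : ∀ x : S, 2 ≤ ((G.induce S).neighborSet x).ncard := by
    rintro ⟨x, hx⟩
    rw [← Set.ncard_image_of_injective _ Subtype.val_injective]
    convert hdeg x hx using 2
    ext y
    simp [and_comm]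
  obtain ⟨B, hB⟩ := exists_isCliqueModel_three_of_not_isAcyclic
    (not_isAcyclic_of_two_le_ncard_neighborSet hdeg')
  refine ⟨_, hB.image (SimpleGraph.Copy.induce G S), fun i => ?_⟩
  obtain ⟨x, hx⟩ := (hB.1 i).nonempty
  have hxi := Set.mem_image_of_mem (SimpleGraph.Copy.induce G S) hx
  exact ⟨Set.image_subset_iff.2 fun y _ => y.2, ⟨_, hxi, ha x x.2⟩, _, hxi, hb x x.2⟩

theorem CodegreeLETwo.exists_forall_ne_adj (hN : CodegreeLETwo G N) {T : Set V} {c : V}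
    (ha : a ∈ N) (hc : c ∈ N) (hca : c ≠ a) (hnca : ¬ G.Adj c a) (hTN : T ⊆ N) (haT : a ∉ T)
    (hcT : c ∉ T) (hT : T.Nonempty) : ∃ s ∈ T, ∀ t ∈ T, t ≠ s → G.Adj c t := by
  by_cases hall : ∀ t ∈ T, G.Adj c t
  · exact ⟨hT.some, hT.some_mem, fun t ht _ => hall t ht⟩
  push Not at hall
  obtain ⟨s, hs, hncs⟩ := hall
  refine ⟨s, hs, fun t ht hts => ?_⟩
  have := @hN c a s t (by grind) (by grind)
  tauto

theorem hasJoinedTriangle_of_one_nonneighbor (hN : CodegreeLETwo G N) (ha : a ∈ N) {c : V}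
    (hc : c ∈ N \ {a, b}) (hnac : ¬ G.Adj a c) {T : Set V} (hTN : T ⊆ N \ {a, b, c})
    (hT : 4 ≤ T.ncard) (haT : ∀ t ∈ T, G.Adj a t) (hbT : ∀ t ∈ T, G.Adj b t) :
    HasJoinedTriangle G (N \ {a, b}) a b := by
  obtain ⟨s, hs, hcs⟩ := hN.exists_forall_ne_adj (T := T) (c := c) ha hc.1 (by grind)
    (fun h => hnac h.symm) (by grind) (by grind) (by grind)
    (Set.nonempty_of_ncard_ne_zero (by omega))
  obtain ⟨U, hUT, hU⟩ := Set.exists_subset_card_eq (s := T \ {s}) (n := 3)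
    (by rw [Set.ncard_sdiff_singleton_of_mem hs]; omega)
  have hU' : ∀ x ∈ U, x ∈ T ∧ x ≠ s := fun x hx => by simpa using hUT hx
  have hT' : ∀ x ∈ T, x ∈ N ∧ x ≠ a ∧ x ≠ b ∧ x ≠ c := fun x hx => by simpa using hTN hx
  by_cases hedge : ∃ p ∈ U, ∃ q ∈ U, G.Adj p q
  · obtain ⟨p, hp, q, hq, hpq⟩ := hedge
    obtain ⟨r, hr, hrpq⟩ := Set.exists_mem_notMem_of_ncard_lt_ncard (s := {p, q}) (t := U)
      ((Set.ncard_insert_le p {q}).trans_lt (by simp [hU]))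
    simp only [Set.mem_insert_iff, Set.mem_singleton_iff, not_or] at hrpq
    have hpq' := hpq.ne
    apply HasJoinedTriangle.of_pairs (x := p) (y := q) (z := q) (w := c) (v := r) <;>
      grind [G.adj_comm, Set.insert_subset_iff]
  · push Not at hedge
    obtain ⟨p, q, r, hpq, hpr, hqr, rfl⟩ := Set.ncard_eq_three.1 hU
    simp only [Set.mem_insert_iff, Set.mem_singleton_iff, forall_eq_or_imp, forall_eq] at hU' hedge
    have hsp := @hN p q r s (by grind) (by grind)
    have hsq := @hN q p r s (by grind) (by grind)
    have hsr := @hN r p q s (by grind) (by grind)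
    apply HasJoinedTriangle.of_pairs (x := p) (y := c) (z := q) (w := s) (v := r) <;>
      grind [G.adj_comm, Set.insert_subset_iff]

theorem hasJoinedTriangle_of_forall_ne_adj {c d s s' : V} {T : Set V}
    (hS : insert c (insert d T) ⊆ S) (hcd : c ≠ d) (hcT : c ∉ T) (hdT : d ∉ T)
    (hT : 3 ≤ T.ncard) (hs : s ∈ T) (hs' : s' ∈ T) (hss : s ≠ s')
    (hcs : ∀ t ∈ T, t ≠ s → G.Adj c t) (hds : ∀ t ∈ T, t ≠ s' → G.Adj d t)
    (hc : G.Adj c d ∨ G.Adj c s) (had : G.Adj a d) (hbc : G.Adj b c)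
    (haT : ∀ t ∈ T, G.Adj a t) (hbT : ∀ t ∈ T, G.Adj b t) : HasJoinedTriangle G S a b := by
  obtain ⟨m, hm, hmss⟩ := Set.exists_mem_notMem_of_ncard_lt_ncard (s := {s, s'}) (t := T)
    ((Set.ncard_insert_le s {s'}).trans_lt (by rw [Set.ncard_singleton]; omega))
  simp only [Set.mem_insert_iff, Set.mem_singleton_iff, not_or] at hmss
  apply HasJoinedTriangle.of_pairs (x := m) (y := c) (z := s') (w := d) (v := s) <;>
    grind [G.adj_comm, Set.insert_subset_iff]

theorem hasJoinedTriangle_of_two_nonneighbors (hN : CodegreeLETwo G N) (ha : a ∈ N) (hb : b ∈ N)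
    {c d : V} (hc : c ∈ N \ {a, b}) (hd : d ∈ N \ {a, b}) (hnac : ¬ G.Adj a c) (hnbd : ¬ G.Adj b d)
    (had : G.Adj a d) (hbc : G.Adj b c) {T : Set V}
    (hTN : T ⊆ N \ {a, b, c, d}) (hT : 3 ≤ T.ncard) (haT : ∀ t ∈ T, G.Adj a t)
    (hbT : ∀ t ∈ T, G.Adj b t) : HasJoinedTriangle G (N \ {a, b}) a b := by
  have hT' : ∀ x ∈ T, x ∈ N ∧ x ≠ a ∧ x ≠ b ∧ x ≠ c ∧ x ≠ d := fun x hx => by simpa using hTN hx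
  have hcd : c ≠ d := fun h => hnac (h ▸ had)
  have hTne : T.Nonempty := Set.nonempty_of_ncard_ne_zero (by omega)
  obtain ⟨s, hs, hcs⟩ := hN.exists_forall_ne_adj (T := T) (c := c) ha hc.1 (by grind)
    (fun h => hnac h.symm) (by grind) (by grind) (by grind) hTne
  obtain ⟨s', hs', hds⟩ := hN.exists_forall_ne_adj (T := T) (c := d) hb hd.1 (by grind)
    (fun h => hnbd h.symm) (by grind) (by grind) (by grind) hTne
  have hcd' : ∀ t ∈ T, G.Adj c d ∨ G.Adj c t := fun t ht => by
    have := @hN c a d t (by grind) (by grind)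
    grind [G.adj_comm]
  have of_ne : ∀ s ∈ T, ∀ s' ∈ T, s ≠ s' → (∀ t ∈ T, t ≠ s → G.Adj c t) →
      (∀ t ∈ T, t ≠ s' → G.Adj d t) → HasJoinedTriangle G (N \ {a, b}) a b :=
    fun s hs s' hs' hne hcs hds => hasJoinedTriangle_of_forall_ne_adj
      (by grind) hcd (by grind) (by grind) hT hs hs' hne hcs hds
      (hcd' s hs) had hbc haT hbT
  obtain rfl | hss := eq_or_ne s s'
  · obtain ⟨y, hy, hys⟩ := Set.exists_mem_notMem_of_ncard_lt_ncard (s := {s}) (t := T)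
      (by rw [Set.ncard_singleton]; omega)
    obtain ⟨z, hz, hzys⟩ := Set.exists_mem_notMem_of_ncard_lt_ncard (s := {y, s}) (t := T)
      ((Set.ncard_insert_le y {s}).trans_lt (by rw [Set.ncard_singleton]; omega))
    simp only [Set.mem_insert_iff, Set.mem_singleton_iff, not_or] at hys hzys
    by_cases hcs' : G.Adj c s
    · exact of_ne y hy s hs hys (by grind) hds
    by_cases hds' : G.Adj d s
    · exact of_ne s hs y hy (Ne.symm hys) hcs (by grind)
    have adj_s : ∀ t ∈ T, t ≠ s → G.Adj s t := fun t ht hts => by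
      have := @hN s c d t (by grind) (by grind)
      grind [G.adj_comm]
    have hsy := adj_s y hy hys
    have hsz := adj_s z hz hzys.2
    apply HasJoinedTriangle.of_pairs (x := y) (y := s) (z := z) (w := c) (v := d) <;>
      grind [G.adj_comm, Set.insert_subset_iff]
  · exact of_ne s hs s' hs' hss hcs hds

theorem CodegreeLETwo.of_le_ncard (hN : N.Finite) {m : ℕ} (hcard : N.ncard ≤ m + 3)
    (hdeg : ∀ x ∈ N, m ≤ (N ∩ G.neighborSet x).ncard) : CodegreeLETwo G N := by
  intro x y z w hsub hnodup
  by_contra! hadj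
  have hcard' : ({x, y, z, w} : Set V).ncard = 4 := by
    rw [show ({x, y, z, w} : Set V) = ([x, y, z, w].toFinset : Set V) by simp,
      Set.ncard_coe_finset, List.toFinset_card_of_nodup hnodup]
    rfl
  have hle : ({x, y, z, w} : Set V).ncard ≤ (N \ G.neighborSet x).ncard :=
    Set.ncard_le_ncard (fun t ht => ⟨hsub ht, by grind [G.irrefl, G.mem_neighborSet]⟩) hN.sdiff
  have := hdeg x (hsub (by simp))
  have := Set.ncard_inter_add_ncard_sdiff_eq_ncard N (G.neighborSet x) hN
  omega

theorem hasJoinedTriangle_of_forall_adj (hfin : N.Finite)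
    (hdeg : ∀ x ∈ N, 4 ≤ (N ∩ G.neighborSet x).ncard) (ha : a ∈ N)
    (hax : ∀ x ∈ N \ {a, b}, G.Adj a x) (hbx : ∀ x ∈ N \ {a, b}, G.Adj b x) :
    HasJoinedTriangle G (N \ {a, b}) a b := by
  have hdeg' : ∀ x ∈ N, 2 ≤ (N \ {a, b} ∩ G.neighborSet x).ncard := fun x hx => by
    have hle := Set.le_ncard_sdiff {a, b} (N ∩ G.neighborSet x) (Set.toFinite _)
    rw [Set.inter_sdiff_right_comm] at hle
    have := hdeg x hx
    have := Set.ncard_insert_le a {b}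
    simp only [Set.ncard_singleton] at this
    omega
  have hne : (N \ {a, b} ∩ G.neighborSet a).Nonempty :=
    Set.nonempty_of_ncard_ne_zero (by have := hdeg' a ha; omega)
  exact hasJoinedTriangle_of_two_le_ncard hfin.sdiff hne.left (fun x hx => hdeg' x hx.1) hax hbx

theorem hasJoinedTriangle_of_ncard_le_seven (hfin : N.Finite) (hcard : N.ncard ≤ 7)
    (hdeg : ∀ x ∈ N, 4 ≤ (N ∩ G.neighborSet x).ncard) (ha : a ∈ N) (hb : b ∈ N) (hab : a ≠ b)
    (hnab : ¬ G.Adj a b) : HasJoinedTriangle G (N \ {a, b}) a b := by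
  have hN : CodegreeLETwo G N := .of_le_ncard hfin hcard hdeg
  have hnba : ¬ G.Adj b a := fun h => hnab h.symm
  by_cases hac : ∃ c ∈ N \ {a, b}, ¬ G.Adj a c ∧ ∀ x ∈ N \ {a, b}, x ≠ c → G.Adj b x
  · obtain ⟨c, hc, hnac, hbx⟩ := hac
    exact hasJoinedTriangle_of_one_nonneighbor hN ha hc hnac (T := N ∩ G.neighborSet a)
      (by grind [G.irrefl, G.mem_neighborSet]) (hdeg a ha) (by grind [G.mem_neighborSet])
      (by grind [G.irrefl, G.mem_neighborSet])
  by_cases hbc : ∃ c ∈ N \ {a, b}, ¬ G.Adj b c ∧ ∀ x ∈ N \ {a, b}, x ≠ c → G.Adj a x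
  · obtain ⟨c, hc, hnbc, hax⟩ := hbc
    rw [Set.pair_comm] at hc hax ⊢
    exact (hasJoinedTriangle_of_one_nonneighbor hN hb hc hnbc (T := N ∩ G.neighborSet b)
      (by grind [G.irrefl, G.mem_neighborSet]) (hdeg b hb) (by grind [G.mem_neighborSet])
      (by grind [G.irrefl, G.mem_neighborSet])).symm
  push Not at hac hbc
  by_cases hall : ∀ x ∈ N \ {a, b}, G.Adj a x
  · exact hasJoinedTriangle_of_forall_adj hfin hdeg ha hall (by grind)
  push Not at hall
  obtain ⟨c, hc, hnac⟩ := hall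
  obtain ⟨d, hd, hdc, hnbd⟩ := hac c hc hnac
  have adj_a : ∀ x ∈ N \ {a, b}, x ≠ c → G.Adj a x := fun x hx hxc => by
    have := @hN a b c x (by grind) (by grind)
    tauto
  have adj_b : ∀ x ∈ N \ {a, b}, x ≠ d → G.Adj b x := fun x hx hxd => by
    have := @hN b a d x (by grind) (by grind)
    tauto
  have had : G.Adj a d := adj_a d hd hdc
  have hT : 3 ≤ ((N ∩ G.neighborSet a) \ {d}).ncard := by
    have := hdeg a ha
    have hdT : d ∈ N ∩ G.neighborSet a := ⟨hd.1, had⟩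
    rw [Set.ncard_sdiff_singleton_of_mem hdT]
    omega
  exact hasJoinedTriangle_of_two_nonneighbors hN ha hb hc hd hnac hnbd had
    (adj_b c hc hdc.symm) (by grind [G.irrefl, G.mem_neighborSet]) hT
    (by grind [G.mem_neighborSet]) (by grind [G.irrefl, G.mem_neighborSet])

end Links

section CliqueSums

variable {V : Type*} {G : SimpleGraph V} {u a b : V}

theorem HasJoinedTriangle.hasMinor_top {C : Set V}
    (h : HasJoinedTriangle G (G.neighborSet u \ {a, b}) a b) (ha : G.Adj u a) (hb : G.Adj u b)
    (hab : a ≠ b) (hC : (G.induce C).Connected) (hCu : Disjoint (insert u (G.neighborSet u)) C)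
    (haC : ∃ c ∈ C, G.Adj a c) (hbC : ∃ c ∈ C, G.Adj b c) :
    HasMinor G (⊤ : SimpleGraph (Fin 6)) := by
  obtain ⟨B, hB, hBab⟩ := h
  obtain ⟨c, hc, hac⟩ := haC
  obtain ⟨d, hd, hbd⟩ := hbC
  have hC' : ∀ x ∈ C, x ≠ u ∧ ¬ G.Adj u x := fun x hx => by
    simpa using Set.disjoint_right.1 hCu hx
  have hBi : ∀ i, ∀ x ∈ B i, G.Adj u x ∧ x ≠ a ∧ x ≠ b := fun i x hx => by
    simpa using (hBab i).1 hx
  have hBb : IsCliqueModel G (Fin.cons {b} B : Fin 4 → Set V) :=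
    hB.cons (induce_singleton_connected b) fun i =>
      ⟨Set.disjoint_singleton_left.2 fun hbi => (hBi i b hbi).2.2 rfl, b, rfl, (hBab i).2.2⟩
  have hCb : Disjoint (insert a C) {b} := by grind [G.mem_neighborSet]
  have hCB : ∀ i, Disjoint (insert a C) (B i) := by grind
  have hBba : IsCliqueModel G (Fin.cons (insert a C) (Fin.cons {b} B) : Fin 5 → Set V) :=
    hBb.cons (induce_insert_connected hC hc hac) (Fin.cases
      ⟨hCb, d, Set.mem_insert_of_mem a hd, b, rfl, hbd.symm⟩
      fun i => ⟨hCB i, a, Set.mem_insert a C, (hBab i).2.1⟩)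
  refine (hBba.cons (induce_singleton_connected u) (Fin.cases
    ⟨?_, u, rfl, a, Set.mem_insert a C, ha⟩ (Fin.cases
    ⟨?_, u, rfl, b, rfl, hb⟩ fun i => ?_))).hasMinor
  · grind [Fin.cons_zero]
  · exact Set.disjoint_singleton.2 hb.ne
  · obtain ⟨x, hx⟩ := (hB.1 i).nonempty
    exact ⟨Set.disjoint_singleton_left.2 fun hui => G.irrefl (hBi i u hui).1,
      u, rfl, x, hx, (hBi i x hx).1⟩

theorem induce_componentCompl_connected {K : Set V} (C : G.ComponentCompl K) :
    (G.induce (C : Set V)).Connected := by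
  refine C.connected_toSimpleGraph.map (H := G.induce (C : Set V))
    ⟨fun x => ⟨x.1, x.1.2, x.2⟩, fun h => h⟩ ?_
  rintro ⟨x, hx, hxC⟩
  exact ⟨⟨⟨x, hx⟩, hxC⟩, rfl⟩

/-- `G` is a clique sum over a complete graph on `l` vertices. -/
def IsCliqueSum (G : SimpleGraph V) (l : ℕ) : Prop :=
  ∃ V₁ V₂ : Set V,
    V₁ ∪ V₂ = Set.univ ∧
    (V₁ \ V₂).Nonempty ∧ (V₂ \ V₁).Nonempty ∧
    (∀ x ∈ V₁ \ V₂, ∀ y ∈ V₂ \ V₁, ¬ G.Adj x y) ∧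
    (V₁ ∩ V₂).ncard = l ∧
    (∀ x ∈ V₁ ∩ V₂, ∀ y ∈ V₁ ∩ V₂, x ≠ y → G.Adj x y)

theorem isCliqueSum_of_isClique_attachment {C D : Set V} (hC : C.Nonempty)
    (hCD : Disjoint C D) (hne : (C ∪ D)ᶜ.Nonempty)
    (hD : ∀ x ∈ C, ∀ y ∉ C, G.Adj x y → y ∈ D) (hclique : G.IsClique D) :
    IsCliqueSum G D.ncard := by
  have hinter : (C ∪ D) ∩ Cᶜ = D := by grind
  refine ⟨C ∪ D, Cᶜ, by grind, ?_, ?_, by grind, by rw [hinter], ?_⟩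
  · exact hC.mono (by grind)
  · exact hne.mono (by grind)
  · rw [hinter]
    exact hclique

theorem hasMinor_top_or_isCliqueSum_of_not_isUniversal (hfin : (G.neighborSet u).Finite)
    (hcard : (G.neighborSet u).ncard ≤ 7) (hu : ¬ G.IsUniversal u)
    (htri : ∀ v, G.Adj u v → 4 ≤ (G.neighborSet u ∩ G.neighborSet v).ncard) :
    HasMinor G (⊤ : SimpleGraph (Fin 6)) ∨ ∃ l ≤ 4, IsCliqueSum G l := by
  refine or_iff_not_imp_left.2 fun hG => ?_
  rw [← SimpleGraph.insert_neighborSet_eq_univ, ← ne_eq, Set.ne_univ_iff_exists_notMem] at hu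
  obtain ⟨w, hw⟩ := hu
  let C := G.componentComplMk hw
  have hCu : Disjoint (insert u (G.neighborSet u)) (C : Set V) := C.disjoint_right
  let D : Set V := {x | G.Adj u x ∧ ∃ c ∈ C, G.Adj x c}
  have hD : G.IsClique D := by
    rintro a ⟨hua, hac⟩ b ⟨hub, hbc⟩ hab
    by_contra hnab
    exact hG ((hasJoinedTriangle_of_ncard_le_seven hfin hcard htri hua hub hab hnab).hasMinor_top
      hua hub hab (induce_componentCompl_connected C) hCu hac hbc)
  have hDfin : D.Finite := hfin.subset fun x hx => hx.1
  have hDcard : D.ncard ≤ 4 := by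
    by_contra! hlt
    refine hG (.of_isClique (s := insert u D) (hD.insert fun x hx _ => hx.1)
      (hDfin.insert u) ?_)
    rw [Set.ncard_insert_of_notMem (fun hu => G.irrefl hu.1) hDfin]
    exact Nat.succ_le_succ hlt
  have hDu : D ⊆ insert u (G.neighborSet u) := fun x hx => Or.inr hx.1
  have hCne : (C : Set V).Nonempty := C.nonempty
  refine ⟨_, hDcard, isCliqueSum_of_isClique_attachment hCne (hCu.mono_left hDu).symm ⟨u, ?_⟩
    (fun x hx y hy hxy => ?_) hD⟩
  · rintro (hu | hu)
    · exact Set.disjoint_left.1 hCu (Set.mem_insert u _) hu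
    · exact G.irrefl hu.1
  · have hyu : y ∈ insert u (G.neighborSet u) :=
      by_contra fun hyu => hy (C.mem_of_adj x y hx hyu hxy)
    obtain rfl | huy := hyu
    · exact absurd hxy.symm (Set.disjoint_right.1 hCu hx ∘ Or.inr)
    · exact ⟨huy, x, hx, hxy.symm⟩

theorem hasMinor_top_or_isCliqueSum_of_ncard_neighborSet_le_seven [Finite V]
    (hu : (G.neighborSet u).ncard ≤ 7) (hab : G.Adj a b)
    (htri : ∀ v w, G.Adj v w → 4 ≤ (G.neighborSet v ∩ G.neighborSet w).ncard) :
    HasMinor G (⊤ : SimpleGraph (Fin 6)) ∨ ∃ l ≤ 4, IsCliqueSum G l := by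
  by_cases h : ∃ v, (G.neighborSet v).ncard ≤ 7 ∧ ¬ G.IsUniversal v
  · obtain ⟨v, hv, hvu⟩ := h
    exact hasMinor_top_or_isCliqueSum_of_not_isUniversal (Set.toFinite _) hv hvu (htri v)
  push Not at h
  have hdeg_lt : ∀ v, (G.neighborSet v).ncard < Nat.card V := fun v =>
    Set.ncard_lt_card (G.neighborSet_ne_univ v)
  have hV : Nat.card V ≤ 8 := by
    rw [← Set.ncard_univ, ← SimpleGraph.insert_neighborSet_eq_univ.2 (h u hu)]
    exact (Set.ncard_insert_le _ _).trans (Nat.succ_le_succ hu)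
  have hclique : G.IsClique Set.univ := fun v _ w _ hvw =>
    h v (Nat.le_of_lt_succ ((hdeg_lt v).trans_le hV)) hvw
  have hsub : insert b (G.neighborSet a ∩ G.neighborSet b) ⊆ G.neighborSet a :=
    Set.insert_subset hab Set.inter_subset_left
  have hle := Set.ncard_le_ncard hsub
  rw [Set.ncard_insert_of_notMem (fun hb => G.irrefl hb.2)] at hle
  refine .inl (.of_isClique hclique Set.finite_univ ?_)
  have := htri a b hab
  have := hdeg_lt a
  rw [Set.ncard_univ]
  omega

end CliqueSums

section EdgeCounting

variable {V : Type*} {G : SimpleGraph V} {u v : V}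

theorem ncard_edgeSet_induce (G : SimpleGraph V) (s : Set V) :
    (G.induce s).edgeSet.ncard = (G.edgeSet ∩ s.sym2).ncard := by
  rw [← Set.ncard_image_of_injective _ (Sym2.map.injective Subtype.val_injective)]
  congr 1
  ext ⟨x, y⟩
  constructor
  · rintro ⟨⟨a, b⟩, hab, hxy⟩
    rw [← hxy]
    exact ⟨hab, a.2, b.2⟩
  · rintro ⟨hxy, hx, hy⟩
    exact ⟨s(⟨x, hx⟩, ⟨y, hy⟩), hxy, rfl⟩

theorem ncard_incidenceSet (G : SimpleGraph V) (v : V) :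
    (G.incidenceSet v).ncard = (G.neighborSet v).ncard :=
  Nat.card_congr (G.incidenceSetEquivNeighborSet v)

theorem ncard_edgeSet_induce_compl_singleton_add [Finite V] (G : SimpleGraph V) (v : V) :
    (G.induce {v}ᶜ).edgeSet.ncard + (G.neighborSet v).ncard = G.edgeSet.ncard := by
  have hdiff : G.edgeSet ∩ ({v}ᶜ : Set V).sym2 = G.edgeSet \ G.incidenceSet v := by
    ext ⟨x, y⟩
    simp only [Set.mem_inter_iff, Set.mem_sdiff, SimpleGraph.mk'_mem_incidenceSet_iff,
      Set.mk_mem_sym2_iff, Set.mem_compl_singleton_iff, SimpleGraph.mem_edgeSet]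
    tauto
  rw [ncard_edgeSet_induce, hdiff, ← ncard_incidenceSet,
    Set.ncard_sdiff_add_ncard_of_subset (G.incidenceSet_subset v)]

theorem ncard_edgeSet_le_contractEdge [Finite V] (huv : G.Adj u v) :
    G.edgeSet.ncard ≤
      (contractEdge G u v).edgeSet.ncard + (G.neighborSet u ∩ G.neighborSet v).ncard + 1 := by
  let N : Set V := (G.neighborSet v \ G.neighborSet u) \ {u}
  have hsub : (G.edgeSet ∩ ({v}ᶜ : Set V).sym2) ∪ (fun y => s(u, y)) '' N ⊆
      (G.map (Function.update id v u)).edgeSet ∩ ({v}ᶜ : Set V).sym2 := by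
    refine Set.union_subset ?_ ?_
    · rintro ⟨x, y⟩ ⟨hxy, hx, hy⟩
      exact ⟨⟨hxy.ne, x, y, hxy, Function.update_of_ne hx .., Function.update_of_ne hy ..⟩, hx, hy⟩
    · rintro _ ⟨y, ⟨⟨hvy, -⟩, hyu⟩, rfl⟩
      exact ⟨⟨Ne.symm hyu, v, y, hvy, Function.update_self .., Function.update_of_ne hvy.ne' ..⟩,
        huv.ne, hvy.ne'⟩
  have hdisj : Disjoint (G.edgeSet ∩ ({v}ᶜ : Set V).sym2) ((fun y => s(u, y)) '' N) := by
    rw [Set.disjoint_right]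
    rintro _ ⟨y, hy, rfl⟩ huy
    exact hy.1.2 huy.1
  have hinj : Function.Injective fun y => s(u, y) := fun _ _ => Sym2.congr_right.1
  have hle := Set.ncard_le_ncard hsub
  rw [Set.ncard_union_eq hdisj, Set.ncard_image_of_injective _ hinj, ← ncard_edgeSet_induce,
    ← ncard_edgeSet_induce] at hle
  have hdelete := ncard_edgeSet_induce_compl_singleton_add G v
  have hsplit := Set.ncard_inter_add_ncard_sdiff_eq_ncard (G.neighborSet v) (G.neighborSet u)
  have hN : N.ncard + 1 = (G.neighborSet v \ G.neighborSet u).ncard :=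
    Set.ncard_sdiff_singleton_add_one ⟨huv.symm, G.notMem_neighborSet_self⟩
  rw [Set.inter_comm] at hsplit
  unfold contractEdge
  omega

theorem ncard_edgeSet_top (V : Type*) [Finite V] :
    (⊤ : SimpleGraph V).edgeSet.ncard = (Nat.card V).choose 2 := by
  have := Fintype.ofFinite V
  rw [Nat.card_eq_fintype_card, ← SimpleGraph.card_edgeFinset_top_eq_card_choose_two,
    ← SimpleGraph.coe_edgeFinset, Set.ncard_coe_finset]

theorem ncard_edgeSet_le_choose_two [Finite V] (G : SimpleGraph V) :
    G.edgeSet.ncard ≤ (Nat.card V).choose 2 :=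
  ncard_edgeSet_top V ▸ Set.ncard_le_ncard (SimpleGraph.edgeSet_mono le_top)

theorem ncard_edgeSet_add_choose_two [Finite V] {V₁ V₂ : Set V} (hunion : V₁ ∪ V₂ = Set.univ)
    (hsep : ∀ x ∈ V₁ \ V₂, ∀ y ∈ V₂ \ V₁, ¬ G.Adj x y) (hclique : G.IsClique (V₁ ∩ V₂)) :
    G.edgeSet.ncard + (V₁ ∩ V₂).ncard.choose 2 =
      (G.induce V₁).edgeSet.ncard + (G.induce V₂).edgeSet.ncard := by
  have hedge : G.edgeSet ∩ V₁.sym2 ∪ G.edgeSet ∩ V₂.sym2 = G.edgeSet := by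
    rw [← Set.inter_union_distrib_left, Set.inter_eq_left]
    rintro ⟨x, y⟩ hxy
    have hx : x ∈ V₁ ∪ V₂ := hunion ▸ Set.mem_univ x
    have hy : y ∈ V₁ ∪ V₂ := hunion ▸ Set.mem_univ y
    have hxy' := hsep x
    have hyx' := hsep y
    have := G.adj_comm x y
    simp only [Set.mem_union, Set.mk_mem_sym2_iff, Set.mem_sdiff, SimpleGraph.mem_edgeSet] at *
    grind
  have hinter : G.edgeSet ∩ V₁.sym2 ∩ (G.edgeSet ∩ V₂.sym2) = G.edgeSet ∩ (V₁ ∩ V₂).sym2 := by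
    rw [Set.sym2_inter, ← Set.inter_inter_distrib_left]
  rw [ncard_edgeSet_induce, ncard_edgeSet_induce, ← Set.ncard_union_add_ncard_inter, hedge,
    hinter, ← ncard_edgeSet_induce, SimpleGraph.induce_eq_top.2 hclique,
    ncard_edgeSet_top, Nat.card_coe_set_eq]

theorem exists_ncard_neighborSet_lt [Finite V] {m : ℕ}
    (h : 2 * G.edgeSet.ncard < m * Nat.card V) : ∃ v, (G.neighborSet v).ncard < m := by
  have := Fintype.ofFinite V
  by_contra! hm
  have hdeg : ∀ v, m ≤ G.degree v := fun v => by
    simpa only [← SimpleGraph.coe_neighborFinset, Set.ncard_coe_finset,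
      SimpleGraph.card_neighborFinset_eq_degree] using hm v
  have hsum := Finset.card_nsmul_le_sum Finset.univ _ m fun v _ => hdeg v
  rw [G.sum_degrees_eq_twice_card_edges, ← Set.ncard_coe_finset G.edgeFinset,
    SimpleGraph.coe_edgeFinset, Finset.card_univ, ← Nat.card_eq_fintype_card, smul_eq_mul,
    mul_comm] at hsum
  exact h.not_ge hsum

end EdgeCounting

section Mader

variable {V : Type*} {G : SimpleGraph V}

theorem exists_le_ncard_edgeSet_eq {m : ℕ} (hm : m ≤ G.edgeSet.ncard) :
    ∃ H ≤ G, H.edgeSet.ncard = m := by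
  obtain ⟨t, ht, rfl⟩ := Set.exists_subset_card_eq hm
  have hdisj : Disjoint t Sym2.diagSet :=
    Set.disjoint_left.2 fun e he => G.not_isDiag_of_mem_edgeSet (ht he)
  refine ⟨SimpleGraph.fromEdgeSet t, (SimpleGraph.fromEdgeSet_le _).2 ?_, ?_⟩
  · exact Set.sdiff_subset.trans ht
  · rw [SimpleGraph.edgeSet_fromEdgeSet, hdisj.sdiff_eq_left]

theorem IsCliqueSum.exists_four_mul_ncard_le [Finite V] {l : ℕ} (h : IsCliqueSum G l) (hl : l ≤ 4)
    (hdeg : ∀ v, 4 < (G.neighborSet v).ncard) (he : 4 * Nat.card V ≤ G.edgeSet.ncard + 9) :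
    ∃ s : Set V, 4 ≤ s.ncard ∧ s.ncard < Nat.card V ∧
      4 * s.ncard ≤ (G.induce s).edgeSet.ncard + 9 := by
  obtain ⟨V₁, V₂, hunion, ⟨x, hx⟩, ⟨y, hy⟩, hsep, rfl, hclique⟩ := h
  have hmem : ∀ z, z ∈ V₁ ∪ V₂ := fun z => hunion ▸ Set.mem_univ z
  have hNx : G.neighborSet x ⊆ V₁ := fun z hz => by_contra fun hz₁ =>
    hsep x hx z ⟨(hmem z).resolve_left hz₁, hz₁⟩ hz
  have hNy : G.neighborSet y ⊆ V₂ := fun z hz => by_contra fun hz₂ =>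
    hsep z ⟨(hmem z).resolve_right hz₂, hz₂⟩ y hy hz.symm
  have hlarge₁ := (hdeg x).trans_le (Set.ncard_le_ncard hNx)
  have hlarge₂ := (hdeg y).trans_le (Set.ncard_le_ncard hNy)
  have hlt₁ : V₁.ncard < Nat.card V := Set.ncard_lt_card fun h => hy.2 (h ▸ Set.mem_univ y)
  have hlt₂ : V₂.ncard < Nat.card V := Set.ncard_lt_card fun h => hx.2 (h ▸ Set.mem_univ x)
  have hedges := ncard_edgeSet_add_choose_two hunion hsep hclique
  have hcard := Set.ncard_union_add_ncard_inter V₁ V₂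
  rw [hunion, Set.ncard_univ] at hcard
  have hchoose : 4 * (V₁ ∩ V₂).ncard ≤ (V₁ ∩ V₂).ncard.choose 2 + 10 := by
    generalize (V₁ ∩ V₂).ncard = l at hl
    interval_cases l <;> decide
  -- Two sides with at most `4 |Vᵢ| - 10` edges each leave at most `4 |V| - 10` edges in total.
  by_contra! hside
  have hfew₁ := hside V₁ hlarge₁.le hlt₁
  have hfew₂ := hside V₂ hlarge₂.le hlt₂
  omega

theorem six_le_card_of_four_mul_card_le [Finite V] (hV : 4 ≤ Nat.card V)
    (he : 4 * Nat.card V ≤ G.edgeSet.ncard + 9) : 6 ≤ Nat.card V := by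
  have hle := ncard_edgeSet_le_choose_two G
  by_contra! hlt
  interval_cases Nat.card V <;> norm_num [Nat.choose] at hle <;> omega

theorem hasMinor_top_six_or_exists_smaller_minor [Finite V] (hV : 6 ≤ Nat.card V)
    (he : G.edgeSet.ncard + 9 = 4 * Nat.card V) :
    HasMinor G (⊤ : SimpleGraph (Fin 6)) ∨ ∃ (s : Set V) (H : SimpleGraph s), HasMinor G H ∧
      4 ≤ s.ncard ∧ s.ncard < Nat.card V ∧ 4 * s.ncard ≤ H.edgeSet.ncard + 9 := by
  have induce_minor : ∀ s : Set V, HasMinor G (G.induce s) := fun s =>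
    .of_isContained ⟨SimpleGraph.Copy.induce G s⟩
  have hcompl : ∀ v : V, ({v}ᶜ : Set V).ncard + 1 = Nat.card V := fun v => by
    rw [← Set.ncard_add_ncard_compl {v}, Set.ncard_singleton, add_comm]
  by_cases hdeg : ∃ v, (G.neighborSet v).ncard ≤ 4
  · obtain ⟨v, hv⟩ := hdeg
    have hdelete := ncard_edgeSet_induce_compl_singleton_add G v
    have := hcompl v
    exact .inr ⟨{v}ᶜ, _, induce_minor _, by omega, by omega, by omega⟩
  by_cases htri : ∃ v w, G.Adj v w ∧ (G.neighborSet v ∩ G.neighborSet w).ncard < 4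
  · obtain ⟨v, w, hvw, hcommon⟩ := htri
    have hcontract := ncard_edgeSet_le_contractEdge hvw
    have := hcompl w
    exact .inr ⟨{w}ᶜ, _, hasMinor_contractEdge hvw, by omega, by omega, by omega⟩
  push Not at hdeg htri
  obtain ⟨u, hu⟩ := exists_ncard_neighborSet_lt (G := G) (m := 8) (by omega)
  obtain ⟨w, hw⟩ := Set.nonempty_of_ncard_ne_zero (hdeg u).ne_bot
  refine (hasMinor_top_or_isCliqueSum_of_ncard_neighborSet_le_seven (Nat.le_of_lt_succ hu) hw
    htri).imp_right ?_
  rintro ⟨l, hl, hsum⟩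
  obtain ⟨s, hs⟩ := hsum.exists_four_mul_ncard_le hl hdeg he.ge
  exact ⟨s, _, induce_minor s, hs⟩

/-- Mader's edge bound for `K₆`. -/
theorem hasMinor_top_six_of_four_mul_card_le {V : Type*} [Finite V] {G : SimpleGraph V}
    (hV : 4 ≤ Nat.card V) (he : 4 * Nat.card V ≤ G.edgeSet.ncard + 9) :
    HasMinor G (⊤ : SimpleGraph (Fin 6)) := by
  induction hn : Nat.card V using Nat.strong_induction_on generalizing V with | _ n ih
  subst hn
  have hV6 := six_le_card_of_four_mul_card_le hV he
  obtain ⟨H, hHG, hH⟩ := exists_le_ncard_edgeSet_eq (Nat.sub_le_of_le_add he)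
  refine HasMinor.trans (.of_isContained (.of_le hHG)) ?_
  obtain hminor | ⟨s, K, hHK, hs, hlt, hmany⟩ :=
    hasMinor_top_six_or_exists_smaller_minor (G := H) hV6 (by omega)
  · exact hminor
  · rw [← Nat.card_coe_set_eq] at hs hlt hmany
    exact hHK.trans (ih _ hlt hs hmany rfl)

end Mader

/-- If `G` has an edge and every edge of `G` belongs to at least `4` triangles
(i.e. the endpoints of every edge have at least `4` common neighbors), then either
`G` has a `K₆` minor, or `G` is a clique sum over `K_l` for some `l ≤ 4`. -/
theorem hasK6Minor_or_cliqueSum_of_edges_in_triangles {V : Type*} [Fintype V]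
    (G : SimpleGraph V)
    (hedge : G.edgeSet.Nonempty)
    (htri : ∀ v u : V, G.Adj v u → 4 ≤ (G.neighborSet v ∩ G.neighborSet u).ncard) :
    HasMinor G (⊤ : SimpleGraph (Fin 6)) ∨
      ∃ (l : ℕ) (V₁ V₂ : Set V), l ≤ 4 ∧
        V₁ ∪ V₂ = Set.univ ∧
        (V₁ \ V₂).Nonempty ∧ (V₂ \ V₁).Nonempty ∧
        (∀ x ∈ V₁ \ V₂, ∀ y ∈ V₂ \ V₁, ¬ G.Adj x y) ∧
        (V₁ ∩ V₂).ncard = l ∧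
        (∀ x ∈ V₁ ∩ V₂, ∀ y ∈ V₁ ∩ V₂, x ≠ y → G.Adj x y) := by
  obtain ⟨⟨a, b⟩, hab⟩ := hedge
  by_cases hmany : 4 * Nat.card V ≤ G.edgeSet.ncard
  · have hcommon := htri a b hab
    have hlt := Set.ncard_lt_card (G.neighborSet_ne_univ a)
    have hle := Set.ncard_le_ncard (Set.inter_subset_left (s := G.neighborSet a)
      (t := G.neighborSet b))
    exact .inl (hasMinor_top_six_of_four_mul_card_le (by omega) (by omega))
  · obtain ⟨u, hu⟩ := exists_ncard_neighborSet_lt (G := G) (m := 8) (by omega)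
    refine (hasMinor_top_or_isCliqueSum_of_ncard_neighborSet_le_seven
      (Nat.le_of_lt_succ hu) hab htri).imp_right ?_
    rintro ⟨l, hl, V₁, V₂, hsum⟩
    exact ⟨l, V₁, V₂, hl, hsum⟩
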